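/- For all integers n, d, r with n ≤ d ≤ r ≤ R_typ-max(n,d,n), there exist matrices A, C ∈ ℝ^{n×r}, B ∈ ℝ^{d×r} and a vector h₀ ∈ ℝ^n such that rank_CP([[A,B,C]]) = r and rank(B diag(Aᵀh₀) Cᵀ) = rank(tanh(B diag(Aᵀh₀) Cᵀ)) = n, where tanh is applied entrywise to the matrix and diag(v) denotes the diagonal matrix with diagonal v. -/

import Mathlib

open Matrix MeasureTheory

noncomputable section

/-- The CP tensor `[[A,B,C]]`. -/
def cpT {d1 d2 d3 R : ℕ} (A : Matrix (Fin d1) (Fin R) ℝ) (B : Matrix (Fin d2) (Fin R) ℝ)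
    (C : Matrix (Fin d3) (Fin R) ℝ) : Fin d1 → Fin d2 → Fin d3 → ℝ :=
  fun i j k => ∑ r, A i r * B j r * C k r

/-- `(T ×₁ u ×₂ v)` for a third order tensor `T`. -/
def modeProd {d1 d2 d3 : ℕ} (T : Fin d1 → Fin d2 → Fin d3 → ℝ) (u : Fin d1 → ℝ)
    (v : Fin d2 → ℝ) : Fin d3 → ℝ :=
  fun k => ∑ i, ∑ j, T i j k * u i * v j

/-- The CP rank of a tensor: the minimal `R` admitting a rank-`R` CP decomposition. -/
def cprank {d1 d2 d3 : ℕ} (T : Fin d1 → Fin d2 → Fin d3 → ℝ) : ℕ :=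
  sInf {R : ℕ | ∃ (A : Matrix (Fin d1) (Fin R) ℝ) (B : Matrix (Fin d2) (Fin R) ℝ)
    (C : Matrix (Fin d3) (Fin R) ℝ), T = cpT A B C}

/-- The maximal CP rank of tensors in `ℝ^{d1×d2×d3}`. -/
def Rmax (d1 d2 d3 : ℕ) : ℕ :=
  sSup {r : ℕ | ∃ T : Fin d1 → Fin d2 → Fin d3 → ℝ, cprank T = r}

/-- `R` is a typical rank if the set of tensors of CP rank `R` has positive Lebesgue measure. -/
def IsTypicalRank (d1 d2 d3 R : ℕ) : Prop :=
  0 < volume {T : Fin d1 → Fin d2 → Fin d3 → ℝ | cprank T = R}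

/-- The maximal typical CP rank. -/
def RtypMax (d1 d2 d3 : ℕ) : ℕ := sSup {R : ℕ | IsTypicalRank d1 d2 d3 R}

/-- Hidden states of a CPRNN; `x t` is the input at time `t+1`. -/
def cprnnStates {n d R : ℕ} (σ : ℝ → ℝ) (h0 : Fin n → ℝ)
    (A : Matrix (Fin n) (Fin R) ℝ) (B : Matrix (Fin d) (Fin R) ℝ) (C : Matrix (Fin n) (Fin R) ℝ)
    (U : Matrix (Fin n) (Fin d) ℝ) (V : Matrix (Fin n) (Fin n) ℝ) (b : Fin n → ℝ)
    (x : ℕ → Fin d → ℝ) : ℕ → Fin n → ℝ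
  | 0 => h0
  | t + 1 => fun k =>
      σ (modeProd (cpT A B C) (cprnnStates σ h0 A B C U V b x t) (x t) k
        + V.mulVec (cprnnStates σ h0 A B C U V b x t) k + U.mulVec (x t) k + b k)

/-- Hidden states of a CPBIRNN (second-order term only). -/
def cpbirnnStates {n d R : ℕ} (σ : ℝ → ℝ) (h0 : Fin n → ℝ)
    (A : Matrix (Fin n) (Fin R) ℝ) (B : Matrix (Fin d) (Fin R) ℝ) (C : Matrix (Fin n) (Fin R) ℝ)
    (x : ℕ → Fin d → ℝ) : ℕ → Fin n → ℝ
  | 0 => h0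
  | t + 1 => fun k =>
      σ (modeProd (cpT A B C) (cpbirnnStates σ h0 A B C x t) (x t) k)

/-- Hidden states of a 2RNN with arbitrary second-order tensor. -/
def rnn2States {n d : ℕ} (σ : ℝ → ℝ) (h0 : Fin n → ℝ) (T : Fin n → Fin d → Fin n → ℝ)
    (U : Matrix (Fin n) (Fin d) ℝ) (V : Matrix (Fin n) (Fin n) ℝ) (b : Fin n → ℝ)
    (x : ℕ → Fin d → ℝ) : ℕ → Fin n → ℝ
  | 0 => h0
  | t + 1 => fun k =>
      σ (modeProd T (rnn2States σ h0 T U V b x t) (x t) k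
        + V.mulVec (rnn2States σ h0 T U V b x t) k + U.mulVec (x t) k + b k)

/-- Hidden states of a MIRNN. -/
def mirnnStates {n d : ℕ} (σ : ℝ → ℝ) (h0 α β1 β2 b : Fin n → ℝ)
    (U : Matrix (Fin n) (Fin d) ℝ) (V : Matrix (Fin n) (Fin n) ℝ)
    (x : ℕ → Fin d → ℝ) : ℕ → Fin n → ℝ
  | 0 => h0
  | t + 1 => fun k =>
      σ (α k * V.mulVec (mirnnStates σ h0 α β1 β2 b U V x t) k * U.mulVec (x t) k
        + β1 k * V.mulVec (mirnnStates σ h0 α β1 β2 b U V x t) k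
        + β2 k * U.mulVec (x t) k + b k)

/-- The class of functions computed by CPRNNs of rank `R` and hidden size `n`
(mapping the input sequence `x¹,x²,…` to the hidden state sequence `h¹,h²,…`). -/
def HCPRNN (d n R : ℕ) (σ : ℝ → ℝ) : Set ((ℕ → Fin d → ℝ) → ℕ → Fin n → ℝ) :=
  {h | ∃ (h0 : Fin n → ℝ) (A : Matrix (Fin n) (Fin R) ℝ) (B : Matrix (Fin d) (Fin R) ℝ)
      (C : Matrix (Fin n) (Fin R) ℝ) (U : Matrix (Fin n) (Fin d) ℝ)
      (V : Matrix (Fin n) (Fin n) ℝ) (b : Fin n → ℝ),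
      ∀ x t, h x t = cprnnStates σ h0 A B C U V b x (t + 1)}

/-- The class of functions computed by CPBIRNNs of rank `R` and hidden size `n`. -/
def HCPBIRNN (d n R : ℕ) (σ : ℝ → ℝ) : Set ((ℕ → Fin d → ℝ) → ℕ → Fin n → ℝ) :=
  {h | ∃ (h0 : Fin n → ℝ) (A : Matrix (Fin n) (Fin R) ℝ) (B : Matrix (Fin d) (Fin R) ℝ)
      (C : Matrix (Fin n) (Fin R) ℝ),
      ∀ x t, h x t = cpbirnnStates σ h0 A B C x (t + 1)}

/-- The class of functions computed by 2RNNs of hidden size `n`. -/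
def H2RNN (d n : ℕ) (σ : ℝ → ℝ) : Set ((ℕ → Fin d → ℝ) → ℕ → Fin n → ℝ) :=
  {h | ∃ (h0 : Fin n → ℝ) (T : Fin n → Fin d → Fin n → ℝ) (U : Matrix (Fin n) (Fin d) ℝ)
      (V : Matrix (Fin n) (Fin n) ℝ) (b : Fin n → ℝ),
      ∀ x t, h x t = rnn2States σ h0 T U V b x (t + 1)}

/-- The class of functions computed by MIRNNs of hidden size `n`. -/
def HMIRNN (d n : ℕ) (σ : ℝ → ℝ) : Set ((ℕ → Fin d → ℝ) → ℕ → Fin n → ℝ) :=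
  {h | ∃ (h0 α β1 β2 b : Fin n → ℝ) (U : Matrix (Fin n) (Fin d) ℝ)
      (V : Matrix (Fin n) (Fin n) ℝ),
      ∀ x t, h x t = mirnnStates σ h0 α β1 β2 b U V x (t + 1)}

/-- The class `L(n,q) ∘ H_CPBIRNN(R,n)`: CPBIRNNs composed with a linear output map. -/
def LHCPBIRNN (d n q R : ℕ) (σ : ℝ → ℝ) : Set ((ℕ → Fin d → ℝ) → ℕ → Fin q → ℝ) :=
  {f | ∃ (ℓ : (Fin n → ℝ) →ₗ[ℝ] (Fin q → ℝ)) (h : (ℕ → Fin d → ℝ) → ℕ → Fin n → ℝ),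
      h ∈ HCPBIRNN d n R σ ∧ ∀ x t, f x t = ℓ (h x t)}

end

/-!
The tensors of maximal typical rank `R` have positive measure, while the sum of the slices of almost
every tensor has an invertible `n × n` block `N`. Hence some tensor `∑ₛ aₛ ⊗ bₛ ⊗ cₛ` of rank
exactly `R` has such a block. Discarding rank-one terms from such a minimal decomposition leaves a
minimal decomposition. The block is a sum of `R` rank-one matrices `uₛ vₛᵀ`, and as long as there
are more than `n` of them one can be discarded: by the matrix determinant lemma
`det (N - uₛ vₛᵀ) = det N * (1 - vₛᵀ N⁻¹ uₛ)`, and the numbers `vₛᵀ N⁻¹ uₛ` cannot all equal `1`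
since they sum to `tr (N⁻¹ N) = n`. Once only `r` terms are left, take `h₀ = ε • 1`: for small `ε`
the activation acts on `ε N` almost linearly, which preserves invertibility.
-/

section Submatrix

lemma submatrix_mul_diagonal {m p k l R : Type*} [NonUnitalNonAssocSemiring R] [Fintype p]
    [DecidableEq p] [Fintype l] [DecidableEq l] (P : Matrix m p R) (w : p → R) (e : k → m)
    (f : l → p) :
    P.submatrix e f * diagonal (w ∘ f) = (P * diagonal w).submatrix e f := by
  ext i j
  simp only [mul_diagonal, submatrix_apply, Function.comp_apply]

lemma rank_eq_card_of_det_submatrix_ne_zero {m n K : Type*} [Fintype n] [DecidableEq n] [Field K]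
    {M : Matrix m n K} {e : n → m} (h : (M.submatrix e id).det ≠ 0) : M.rank = Fintype.card n := by
  refine le_antisymm M.rank_le_card_width ?_
  rw [← rank_of_isUnit _ ((isUnit_iff_isUnit_det _).mpr h.isUnit)]
  exact rank_submatrix_le M e id

end Submatrix

section SumOfRankOneMatrices

variable {ι n R K : Type*} [Fintype n] [DecidableEq n] [CommRing R] [Field K]

lemma det_sub_vecMulVec {N : Matrix n n R} (hN : IsUnit N.det) (u v : n → R) :
    (N - vecMulVec u v).det = N.det * (1 - v ⬝ᵥ N⁻¹ *ᵥ u) := by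
  rw [sub_eq_add_neg, ← neg_vecMulVec, vecMulVec_eq Unit, det_add_replicateCol_mul_replicateRow hN,
    det_unique (n := Unit), Matrix.mul_assoc, ← replicateCol_mulVec]
  simp [mulVec_neg, sub_eq_add_neg]

lemma sum_dotProduct_inv_mulVec {u v : ι → n → R} {s : Finset ι}
    (h : IsUnit (∑ i ∈ s, vecMulVec (u i) (v i)).det) :
    ∑ i ∈ s, v i ⬝ᵥ (∑ j ∈ s, vecMulVec (u j) (v j))⁻¹ *ᵥ u i = Fintype.card n := by
  set N := ∑ j ∈ s, vecMulVec (u j) (v j) with hN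
  calc ∑ i ∈ s, v i ⬝ᵥ N⁻¹ *ᵥ u i
      = (N⁻¹ * N).trace := by
        rw [hN, Matrix.mul_sum, trace_sum]
        simp_rw [← hN, mul_vecMulVec, trace_vecMulVec, dotProduct_comm]
    _ = Fintype.card n := by rw [nonsing_inv_mul _ h, trace_one]

lemma exists_mem_det_sum_erase_ne_zero [DecidableEq ι] {u v : ι → n → K} {s : Finset ι}
    (h : (∑ i ∈ s, vecMulVec (u i) (v i)).det ≠ 0) (hcard : (s.card : K) ≠ Fintype.card n) :
    ∃ i ∈ s, (∑ j ∈ s.erase i, vecMulVec (u j) (v j)).det ≠ 0 := by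
  by_contra! hzero
  refine hcard ?_
  rw [← sum_dotProduct_inv_mulVec h.isUnit, Finset.cast_card]
  refine Finset.sum_congr rfl fun i hi => ?_
  have hdet := hzero i hi
  rw [Finset.sum_erase_eq_sub hi, det_sub_vecMulVec h.isUnit] at hdet
  exact sub_eq_zero.mp ((mul_eq_zero.mp hdet).resolve_left h)

lemma exists_subset_card_eq_det_sum_ne_zero [CharZero K] {u v : ι → n → K} {s : Finset ι}
    (h : (∑ i ∈ s, vecMulVec (u i) (v i)).det ≠ 0) {r : ℕ} (hnr : Fintype.card n ≤ r)
    (hrs : r ≤ s.card) :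
    ∃ t ⊆ s, t.card = r ∧ (∑ i ∈ t, vecMulVec (u i) (v i)).det ≠ 0 := by
  classical
  induction s using Finset.strongInduction with
  | H s ih =>
    obtain hrs | hrs := hrs.eq_or_lt
    · exact ⟨s, subset_rfl, hrs.symm, h⟩
    have hcard : (s.card : K) ≠ Fintype.card n := mod_cast (hnr.trans_lt hrs).ne'
    obtain ⟨i, hi, hdet⟩ := exists_mem_det_sum_erase_ne_zero h hcard
    have hrs' : r ≤ (s.erase i).card := by
      rw [Finset.card_erase_of_mem hi]
      exact Nat.le_sub_one_of_lt hrs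
    obtain ⟨t, hts, ht⟩ := ih _ (Finset.erase_ssubset hi) hdet hrs'
    exact ⟨t, hts.trans (s.erase_subset i), ht⟩

lemma mul_eq_sum_vecMulVec {m p : Type*} [Fintype ι] (P : Matrix m ι R) (Q : Matrix ι p R) :
    P * Q = ∑ i, vecMulVec (P.col i) (Q.row i) := by
  ext a b
  simp [Matrix.mul_apply, Matrix.sum_apply, vecMulVec_apply]

lemma exists_embedding_det_submatrix_mul_ne_zero [Fintype ι] [CharZero K] {P : Matrix n ι K}
    {Q : Matrix ι n K} (h : (P * Q).det ≠ 0) {r : ℕ} (hnr : Fintype.card n ≤ r)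
    (hr : r ≤ Fintype.card ι) :
    ∃ f : Fin r ↪ ι, (P.submatrix id f * Q.submatrix f id).det ≠ 0 := by
  rw [mul_eq_sum_vecMulVec] at h
  obtain ⟨t, -, htr, hdet⟩ := exists_subset_card_eq_det_sum_ne_zero h hnr hr
  let g : Fin r ≃ t := (Finset.equivFinOfCardEq htr).symm
  refine ⟨g.toEmbedding.trans (.subtype _), ?_⟩
  rw [mul_eq_sum_vecMulVec]
  rwa [← Finset.sum_coe_sort, ← g.sum_comp] at hdet

end SumOfRankOneMatrices

section Activation

variable {𝕜 : Type*} [NontriviallyNormedField 𝕜]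

lemma tendsto_inv_smul_map_smul {m p : Type*} {σ : 𝕜 → 𝕜} {σ' : 𝕜}
    (hσ : HasDerivAt σ σ' 0) (hσ0 : σ 0 = 0) (N : Matrix m p 𝕜) :
    Filter.Tendsto (fun ε : 𝕜 => ε⁻¹ • (ε • N).map σ) (nhdsWithin 0 {0}ᶜ) (nhds (σ' • N)) := by
  refine tendsto_pi_nhds.mpr fun i => tendsto_pi_nhds.mpr fun j => ?_
  have hentry : HasDerivAt (fun ε => σ (ε * N i j)) (σ' * N i j) 0 :=
    HasDerivAt.comp (0 : 𝕜) (by rwa [zero_mul]) (hasDerivAt_mul_const (N i j))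
  simpa [hσ0] using hentry.tendsto_slope_zero

lemma exists_det_map_smul_ne_zero {n : Type*} [Fintype n] [DecidableEq n] {σ : 𝕜 → 𝕜} {σ' : 𝕜}
    (hσ : HasDerivAt σ σ' 0) (hσ0 : σ 0 = 0) (hσ' : σ' ≠ 0) {N : Matrix n n 𝕜} (hN : N.det ≠ 0) :
    ∃ ε : 𝕜, ε ≠ 0 ∧ ((ε • N).map σ).det ≠ 0 := by
  have hlim : (σ' • N).det ≠ 0 := by
    rw [det_smul]
    exact mul_ne_zero (pow_ne_zero _ hσ') hN
  have htendsto := ((continuous_id.matrix_det.tendsto (σ' • N)).comp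
    (tendsto_inv_smul_map_smul hσ hσ0 N)).eventually_ne hlim
  obtain ⟨ε, hdet, hε⟩ := (htendsto.and self_mem_nhdsWithin).exists
  refine ⟨ε, hε, fun hzero => hdet ?_⟩
  simp [hzero]

lemma hasDerivAt_tanh_zero : HasDerivAt Real.tanh 1 0 := by
  have hdiv := (Real.hasDerivAt_sinh 0).div (Real.hasDerivAt_cosh 0) (Real.cosh_pos 0).ne'
  rw [show Real.tanh = Real.sinh / Real.cosh from funext Real.tanh_eq_sinh_div_cosh]
  simpa using hdiv

end Activation

section GenericInvertibility

variable {n : Type*} [Fintype n] [DecidableEq n]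

lemma finite_setOf_det_add_smul_one_eq_zero {K : Type*} [Field K] (N : Matrix n n K) :
    {t : K | (N + t • 1).det = 0}.Finite := by
  refine ((-N).charpoly.rootSet_finite K).subset fun t ht => ?_
  rw [Polynomial.mem_rootSet, Polynomial.coe_aeval_eq_eval, eval_charpoly]
  refine ⟨(charpoly_monic _).ne_zero, ?_⟩
  rwa [sub_neg_eq_add, add_comm, scalar_apply, ← smul_one_eq_diagonal]

lemma ae_det_ne_zero_of_apply_eq_one {V : Type*} [NormedAddCommGroup V] [NormedSpace ℝ V]
    [FiniteDimensional ℝ V] [MeasurableSpace V] [BorelSpace V] (μ : Measure V) [μ.IsAddHaarMeasure]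
    (L : V →ₗ[ℝ] Matrix n n ℝ) {E : V} (hE : L E = 1) : ∀ᵐ v ∂μ, (L v).det ≠ 0 := by
  have hmeas : MeasurableSet {v | (L v).det ≠ 0} :=
    (isOpen_ne_fun L.continuous_of_finiteDimensional.matrix_det continuous_const).measurableSet
  refine ae_mem_of_ae_add_linearMap_mem (.toSpanSingleton ℝ V E) volume μ hmeas fun v => ?_
  have hroots := (finite_setOf_det_add_smul_one_eq_zero (L v)).countable
  filter_upwards [hroots.ae_notMem volume] with t ht
  change (L (v + t • E)).det ≠ 0
  rwa [map_add, map_smul, hE]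

end GenericInvertibility

section CPRank

variable {d1 d2 d3 : ℕ}

lemma sum_eq_cpT {ι : Type*} [Fintype ι] {R : ℕ} (g : Fin R ≃ ι) (A : Matrix (Fin d1) ι ℝ)
    (B : Matrix (Fin d2) ι ℝ) (C : Matrix (Fin d3) ι ℝ) :
    (fun i j k => ∑ s, A i s * B j s * C k s) =
      cpT (A.submatrix id g) (B.submatrix id g) (C.submatrix id g) := by
  funext i j k
  exact (g.sum_comp fun s => A i s * B j s * C k s).symm

lemma cprank_sum_le_card {ι : Type*} [Fintype ι] (A : Matrix (Fin d1) ι ℝ) (B : Matrix (Fin d2) ι ℝ)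
    (C : Matrix (Fin d3) ι ℝ) :
    cprank (fun i j k => ∑ s, A i s * B j s * C k s) ≤ Fintype.card ι :=
  Nat.sInf_le ⟨_, _, _, sum_eq_cpT (Fintype.equivFin ι).symm A B C⟩

lemma eq_sum_fibers (T : Fin d1 → Fin d2 → Fin d3 → ℝ) :
    T = fun i j k => ∑ s : Fin d1 × Fin d2,
      (if i = s.1 then 1 else 0) * (if j = s.2 then 1 else 0) * T s.1 s.2 k := by
  funext i j k
  simp [Fintype.sum_prod_type]

lemma cprank_le_mul (T : Fin d1 → Fin d2 → Fin d3 → ℝ) : cprank T ≤ d1 * d2 := by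
  rw [eq_sum_fibers T]
  simpa using cprank_sum_le_card (fun i (s : Fin d1 × Fin d2) => if i = s.1 then 1 else 0)
    (fun j s => if j = s.2 then 1 else 0) (fun k s => T s.1 s.2 k)

lemma exists_eq_cpT_cprank (T : Fin d1 → Fin d2 → Fin d3 → ℝ) :
    ∃ (A : Matrix (Fin d1) (Fin (cprank T)) ℝ) (B : Matrix (Fin d2) (Fin (cprank T)) ℝ)
      (C : Matrix (Fin d3) (Fin (cprank T)) ℝ), T = cpT A B C :=
  Nat.sInf_mem (s := {R | ∃ (A : Matrix (Fin d1) (Fin R) ℝ) (B : Matrix (Fin d2) (Fin R) ℝ)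
    (C : Matrix (Fin d3) (Fin R) ℝ), T = cpT A B C})
    ⟨_, _, _, _, (eq_sum_fibers T).trans (sum_eq_cpT (Fintype.equivFin _).symm _ _ _)⟩

lemma cprank_add_le (T T' : Fin d1 → Fin d2 → Fin d3 → ℝ) :
    cprank (T + T') ≤ cprank T + cprank T' := by
  obtain ⟨A, B, C, hT⟩ := exists_eq_cpT_cprank T
  obtain ⟨A', B', C', hT'⟩ := exists_eq_cpT_cprank T'
  have hsum := cprank_sum_le_card (fromCols A A') (fromCols B B') (fromCols C C')
  simp only [Fintype.sum_sum_type, fromCols_apply_inl, fromCols_apply_inr, Fintype.card_sum,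
    Fintype.card_fin] at hsum
  convert hsum using 2
  conv_lhs => rw [hT, hT']
  rfl

lemma cprank_cpT_submatrix {r R : ℕ} {A : Matrix (Fin d1) (Fin R) ℝ} {B : Matrix (Fin d2) (Fin R) ℝ}
    {C : Matrix (Fin d3) (Fin R) ℝ} (h : cprank (cpT A B C) = R) (f : Fin r ↪ Fin R) :
    cprank (cpT (A.submatrix id f) (B.submatrix id f) (C.submatrix id f)) = r := by
  classical
  have hle : cprank (cpT (A.submatrix id f) (B.submatrix id f) (C.submatrix id f)) ≤ r :=
    Nat.sInf_le ⟨_, _, _, rfl⟩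
  let g : {s // s ∉ Set.range f} → Fin R := Subtype.val
  let split : Fin r ⊕ {s // s ∉ Set.range f} ≃ Fin R :=
    ((Equiv.ofInjective f f.injective).sumCongr (.refl _)).trans (Equiv.sumCompl (· ∈ Set.range f))
  have hsplit : cpT A B C = cpT (A.submatrix id f) (B.submatrix id f) (C.submatrix id f) +
      fun i j k => ∑ s, A.submatrix id g i s * B.submatrix id g j s * C.submatrix id g k s := by
    funext i j k
    exact (split.sum_comp _).symm.trans (Fintype.sum_sum_type _)
  have hcompl := cprank_sum_le_card (A.submatrix id g) (B.submatrix id g) (C.submatrix id g)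
  have hcard := Fintype.card_congr split
  rw [Fintype.card_sum, Fintype.card_fin, Fintype.card_fin] at hcard
  have hadd := hsplit ▸ cprank_add_le _ _
  omega

end CPRank

section TypicalRank

variable {m d n : ℕ}

lemma IsTypicalRank.le_mul {R : ℕ} (hR : IsTypicalRank m d n R) : R ≤ m * d := by
  obtain ⟨T, rfl⟩ := nonempty_of_measure_ne_zero (ne_of_gt hR)
  exact cprank_le_mul T

instance isAddHaarMeasure_volume_tensor :
    (volume : Measure (Fin m → Fin d → Fin n → ℝ)).IsAddHaarMeasure :=
  have : (volume : Measure (Fin d → Fin n → ℝ)).IsAddHaarMeasure := Measure.pi.isAddHaarMeasure _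
  Measure.pi.isAddHaarMeasure _

lemma exists_isTypicalRank (m d n : ℕ) : ∃ R, IsTypicalRank m d n R := by
  by_contra! hnull
  have hae : ∀ᵐ T : Fin m → Fin d → Fin n → ℝ, ∀ R, cprank T ≠ R :=
    ae_all_iff.mpr fun R => by simpa [ae_iff, IsTypicalRank] using hnull R
  obtain ⟨T, hT⟩ := hae.exists
  exact hT _ rfl

lemma isTypicalRank_RtypMax (m d n : ℕ) : IsTypicalRank m d n (RtypMax m d n) :=
  Nat.sSup_mem (exists_isTypicalRank m d n) ⟨m * d, fun _ => IsTypicalRank.le_mul⟩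

/-- The contraction `T ×₁ h` of a tensor with a vector along its first mode, as a matrix indexed by
the two remaining modes. -/
def contractFst (h : Fin m → ℝ) :
    (Fin m → Fin d → Fin n → ℝ) →ₗ[ℝ] Matrix (Fin d) (Fin n) ℝ where
  toFun T := Matrix.of fun j k => ∑ i, T i j k * h i
  map_add' T T' := by ext; simp [add_mul, Finset.sum_add_distrib]
  map_smul' c T := by ext; simp [mul_assoc, Finset.mul_sum]

lemma contractFst_cpT {R : ℕ} (A : Matrix (Fin m) (Fin R) ℝ) (B : Matrix (Fin d) (Fin R) ℝ)
    (C : Matrix (Fin n) (Fin R) ℝ) (h : Fin m → ℝ) :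
    contractFst h (cpT A B C) = B * diagonal (Aᵀ *ᵥ h) * Cᵀ := by
  ext j k
  rw [Matrix.mul_apply]
  simp only [contractFst, cpT, LinearMap.coe_mk, AddHom.coe_mk, of_apply, mul_diagonal, mulVec,
    dotProduct, transpose_apply, Finset.sum_mul, Finset.mul_sum]
  rw [Finset.sum_comm]
  exact Finset.sum_congr rfl fun s _ => Finset.sum_congr rfl fun i _ => by ring

lemma ae_det_contractFst_one_ne_zero (hm : n ≠ 0 → m ≠ 0) {e : Fin n → Fin d}
    (he : Function.Injective e) :
    ∀ᵐ T : Fin m → Fin d → Fin n → ℝ, ((contractFst 1 T).submatrix e id).det ≠ 0 := by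
  rcases eq_or_ne n 0 with rfl | hn
  · simp
  have : NeZero m := ⟨hm hn⟩
  let L : (Fin m → Fin d → Fin n → ℝ) →ₗ[ℝ] Matrix (Fin n) (Fin n) ℝ :=
    { toFun := fun T => (contractFst 1 T).submatrix e id
      map_add' := fun T T' => by rw [map_add, submatrix_add]; rfl
      map_smul' := fun c T => by rw [map_smul, submatrix_smul]; rfl }
  let E : Fin m → Fin d → Fin n → ℝ := fun i j k => if i = 0 ∧ j = e k then 1 else 0
  have hE : L E = 1 := by
    ext a b
    simp [L, E, contractFst, Matrix.one_apply, he.eq_iff, ite_and]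
  exact ae_det_ne_zero_of_apply_eq_one volume L hE

lemma exists_cprank_eq_RtypMax_det_ne_zero (hm : n ≠ 0 → m ≠ 0) {e : Fin n → Fin d}
    (he : Function.Injective e) :
    ∃ (A : Matrix (Fin m) (Fin (RtypMax m d n)) ℝ) (B : Matrix (Fin d) (Fin (RtypMax m d n)) ℝ)
      (C : Matrix (Fin n) (Fin (RtypMax m d n)) ℝ), cprank (cpT A B C) = RtypMax m d n ∧
      ((B * diagonal (Aᵀ *ᵥ 1) * Cᵀ).submatrix e id).det ≠ 0 := by
  have htypical : ∃ᵐ T : Fin m → Fin d → Fin n → ℝ, cprank T = RtypMax m d n :=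
    frequently_ae_iff.mpr (isTypicalRank_RtypMax m d n).ne'
  obtain ⟨T, hrank, hdet⟩ :=
    (htypical.and_eventually (ae_det_contractFst_one_ne_zero hm he)).exists
  obtain ⟨A, B, C, hT⟩ := exists_eq_cpT_cprank T
  rw [← hrank]
  refine ⟨A, B, C, by rw [← hT], ?_⟩
  rwa [hT, contractFst_cpT] at hdet

lemma exists_cprank_eq_det_ne_zero {r : ℕ} (hnr : n ≤ r) (hr : r ≤ RtypMax m d n)
    {e : Fin n → Fin d} (he : Function.Injective e) :
    ∃ (A : Matrix (Fin m) (Fin r) ℝ) (B : Matrix (Fin d) (Fin r) ℝ) (C : Matrix (Fin n) (Fin r) ℝ),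
      cprank (cpT A B C) = r ∧ ((B * diagonal (Aᵀ *ᵥ 1) * Cᵀ).submatrix e id).det ≠ 0 := by
  have hm : n ≠ 0 → m ≠ 0 := by
    rintro hn rfl
    exact hn (by simpa using hnr.trans (hr.trans (isTypicalRank_RtypMax 0 d n).le_mul))
  obtain ⟨A, B, C, hrank, hdet⟩ := exists_cprank_eq_RtypMax_det_ne_zero hm he
  obtain ⟨f, hf⟩ := exists_embedding_det_submatrix_mul_ne_zero
    (P := (B * diagonal (Aᵀ *ᵥ 1)).submatrix e id) hdet (by simpa) (by simpa)
  refine ⟨A.submatrix id f, B.submatrix id f, C.submatrix id f, cprank_cpT_submatrix hrank f, ?_⟩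
  rwa [submatrix_submatrix, Function.comp_id, ← submatrix_mul_diagonal] at hf

end TypicalRank

theorem exists_cp_rank_r_full_rank_general {m d n r : ℕ} {σ : ℝ → ℝ} {σ' : ℝ}
    (hσ : HasDerivAt σ σ' 0) (hσ0 : σ 0 = 0) (hσ' : σ' ≠ 0) (hnd : n ≤ d) (hnr : n ≤ r)
    (hr : r ≤ RtypMax m d n) :
    ∃ (A : Matrix (Fin m) (Fin r) ℝ) (B : Matrix (Fin d) (Fin r) ℝ)
      (C : Matrix (Fin n) (Fin r) ℝ) (h0 : Fin m → ℝ),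
      cprank (cpT A B C) = r ∧
      (B * diagonal (Aᵀ *ᵥ h0) * Cᵀ).rank = n ∧
      ((B * diagonal (Aᵀ *ᵥ h0) * Cᵀ).map σ).rank = n := by
  let e : Fin n → Fin d := Fin.castLE hnd
  obtain ⟨A, B, C, hrank, hdet⟩ := exists_cprank_eq_det_ne_zero hnr hr (Fin.castLE_injective hnd)
  obtain ⟨ε, hε, hdetσ⟩ := exists_det_map_smul_ne_zero hσ hσ0 hσ' hdet
  have hscale : B * diagonal (Aᵀ *ᵥ (ε • 1)) * Cᵀ = ε • (B * diagonal (Aᵀ *ᵥ 1) * Cᵀ) := by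
    rw [mulVec_smul, diagonal_smul, Matrix.mul_smul, Matrix.smul_mul]
  refine ⟨A, B, C, ε • 1, hrank, ?_, ?_⟩
  · refine (rank_eq_card_of_det_submatrix_ne_zero (e := e) ?_).trans (Fintype.card_fin n)
    rw [hscale]
    exact (det_smul _ ε).trans_ne (mul_ne_zero (pow_ne_zero _ hε) hdet)
  · refine (rank_eq_card_of_det_submatrix_ne_zero (e := e) ?_).trans (Fintype.card_fin n)
    rwa [hscale]

/-- For all `n ≤ d ≤ r ≤ R_typ-max(n,d,n)`, there exist
`A, C ∈ ℝ^{n×r}`, `B ∈ ℝ^{d×r}` and `h₀ ∈ ℝ^n` with `rank_CP([[A,B,C]]) = r` and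
`rank(B diag(Aᵀh₀) Cᵀ) = rank(tanh(B diag(Aᵀh₀) Cᵀ)) = n`. -/
theorem exists_cp_rank_r_full_rank (n d r : ℕ) (hnd : n ≤ d) (hdr : d ≤ r)
    (hr : r ≤ RtypMax n d n) :
    ∃ (A : Matrix (Fin n) (Fin r) ℝ) (B : Matrix (Fin d) (Fin r) ℝ)
      (C : Matrix (Fin n) (Fin r) ℝ) (h0 : Fin n → ℝ),
      cprank (cpT A B C) = r ∧
      (B * Matrix.diagonal (Aᵀ.mulVec h0) * Cᵀ).rank = n ∧
      ((B * Matrix.diagonal (Aᵀ.mulVec h0) * Cᵀ).map Real.tanh).rank = n := by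
  exact exists_cp_rank_r_full_rank_general hasDerivAt_tanh_zero Real.tanh_zero one_ne_zero hnd
    (hnd.trans hdr) hr
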